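/- Let Z, X be topological spaces, δ : Z → X a continuous open surjection, f : X → ℝ, and p < q rationals. Then for every ordinal ξ, δ⁻¹(D^ξ_{f,p,q}) = D^ξ_{f∘δ,p,q}, where the iterates on the left are taken in X and those on the right in Z. Consequently, for every z ∈ Z and every ordinal ξ, z ∈ D^ξ_{f∘δ,p,q} if and only if δ(z) ∈ D^ξ_{f,p,q}; moreover D^ξ_{f∘δ,p,q} = ∅ if and only if D^ξ_{f,p,q} = ∅, so the least ordinal ξ with z ∉ D^ξ_{f∘δ,p,q} equals the least ordinal ξ with δ(z) ∉ D^ξ_{f,p,q}, and α(f∘δ,p,q) = α(f,p,q) whenever either is defined. -/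

import Mathlib

/-!
Preimages under a continuous open map commute with closure, and they always commute with
intersections. Hence they commute with the Bourgain derivative (`preimage_bDeriv`) and, by
transfinite induction, with all its iterates. The emptiness statements follow because the preimage
of a set under a surjection is empty only if the set is; the statements about least ordinals then
hold because the two sets of ordinals are equal.
-/

/-- The Bourgain derivative of `P` for `f` and rationals `p < q`. -/
def bDeriv {X : Type*} [TopologicalSpace X] (f : X → ℝ) (p q : ℚ) (P : Set X) : Set X :=
  P ∩ closure {y | y ∈ P ∧ f y ≤ (p : ℝ)} ∩ closure {y | y ∈ P ∧ (q : ℝ) ≤ f y}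

/-- Ordinal iterates of the Bourgain derivative, starting from the whole space. -/
noncomputable def bIter {X : Type*} [TopologicalSpace X] (f : X → ℝ) (p q : ℚ)
    (ξ : Ordinal.{0}) : Set X :=
  Ordinal.limitRecOn ξ Set.univ (fun _ ih => bDeriv f p q ih)
    (fun o _ ih => ⋂ (η : Ordinal) (h : η < o), ih η h)

theorem preimage_bDeriv {Z X : Type*} [TopologicalSpace Z] [TopologicalSpace X]
    {δ : Z → X} (hc : Continuous δ) (ho : IsOpenMap δ) (f : X → ℝ) (p q : ℚ) (P : Set X) :
    δ ⁻¹' (bDeriv f p q P) = bDeriv (f ∘ δ) p q (δ ⁻¹' P) := by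
  simp only [bDeriv, Set.preimage_inter, ho.preimage_closure_eq_closure_preimage hc]
  rfl

theorem bIter_zero {X : Type*} [TopologicalSpace X] (f : X → ℝ) (p q : ℚ) :
    bIter f p q 0 = Set.univ :=
  Ordinal.limitRecOn_zero ..

theorem bIter_add_one {X : Type*} [TopologicalSpace X] (f : X → ℝ) (p q : ℚ)
    (ξ : Ordinal.{0}) : bIter f p q (ξ + 1) = bDeriv f p q (bIter f p q ξ) :=
  Ordinal.limitRecOn_add_one ..

theorem bIter_limit {X : Type*} [TopologicalSpace X] (f : X → ℝ) (p q : ℚ)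
    {ξ : Ordinal.{0}} (h : Order.IsSuccLimit ξ) :
    bIter f p q ξ = ⋂ (η : Ordinal) (_ : η < ξ), bIter f p q η :=
  Ordinal.limitRecOn_limit _ _ _ _ h

theorem preimage_bIter_eq {Z X : Type*} [TopologicalSpace Z] [TopologicalSpace X]
    {δ : Z → X} (hc : Continuous δ) (ho : IsOpenMap δ) (f : X → ℝ) (p q : ℚ)
    (ξ : Ordinal.{0}) : δ ⁻¹' (bIter f p q ξ) = bIter (f ∘ δ) p q ξ := by
  induction ξ using Ordinal.limitRecOn with
  | zero => simp only [bIter_zero, Set.preimage_univ]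
  | add_one ξ ih => rw [bIter_add_one, bIter_add_one, preimage_bDeriv hc ho, ih]
  | limit ξ hξ ih =>
    rw [bIter_limit f p q hξ, bIter_limit (f ∘ δ) p q hξ]
    simp only [Set.preimage_iInter]
    exact Set.iInter₂_congr ih

theorem preimage_bIter {Z X : Type*} [TopologicalSpace Z] [TopologicalSpace X]
    (δ : Z → X) (hc : Continuous δ) (ho : IsOpenMap δ) (hs : Function.Surjective δ)
    (f : X → ℝ) (p q : ℚ) (hpq : p < q) :
    (∀ ξ : Ordinal.{0}, δ ⁻¹' (bIter f p q ξ) = bIter (f ∘ δ) p q ξ) ∧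
    (∀ (z : Z) (ξ : Ordinal.{0}), z ∈ bIter (f ∘ δ) p q ξ ↔ δ z ∈ bIter f p q ξ) ∧
    (∀ ξ : Ordinal.{0}, bIter (f ∘ δ) p q ξ = (∅ : Set Z) ↔ bIter f p q ξ = (∅ : Set X)) ∧
    (∀ z : Z, sInf {ξ : Ordinal.{0} | z ∉ bIter (f ∘ δ) p q ξ}
      = sInf {ξ : Ordinal.{0} | δ z ∉ bIter f p q ξ}) ∧
    sInf {ξ : Ordinal.{0} | bIter (f ∘ δ) p q ξ = ∅}
      = sInf {ξ : Ordinal.{0} | bIter f p q ξ = ∅} := by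
  have key := preimage_bIter_eq hc ho f p q
  have mem : ∀ (z : Z) (ξ : Ordinal.{0}), z ∈ bIter (f ∘ δ) p q ξ ↔ δ z ∈ bIter f p q ξ :=
    fun z ξ => by rw [← key ξ, Set.mem_preimage]
  have empty : ∀ ξ : Ordinal.{0},
      bIter (f ∘ δ) p q ξ = (∅ : Set Z) ↔ bIter f p q ξ = (∅ : Set X) :=
    fun ξ => by rw [← key ξ, ← Set.preimage_empty (f := δ), hs.preimage_injective.eq_iff]
  exact ⟨key, mem, empty, fun z => by simp only [mem], by simp only [empty]⟩
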